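/- Let P be a finite pure weighted graded poset of rank d, let −1 ≤ k < l ≤ d, and let f, g ∈ C^l. Then ⟨D_l f, D_l g⟩ = Σ_{x∈P(k)} m(x)·⟨D_{x,l−k−1} f_x, D_{x,l−k−1} g_x⟩_x, where f_x, g_x are the localizations to the link P_x and D_{x,i} is the down operator of the link P_x. -/

import Mathlib

/-!
The random walk going down from `y`, with transition probabilities `p`, visits each rank between
`-1` and `rk y` exactly once, so for `x ∈ P(k)` the chain sums `Σ_{c ∈ Ch(y→x)} p(c)` add up
to `1`. As `m(x) m_x(y)` is `m(y)` times this sum, averaging the inner products of the links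
over `P(k)` gives back the inner product of `P`. On the other hand, for `x ≤ y` the chain sums in
`(p_x)_{z→y} m_x(z) / m_x(y)` cancel, so the down operator of the link is the restriction of the
down operator of `P`.
-/

open Finset

attribute [local instance] Classical.propDecidable

noncomputable section

/-- A finite pure weighted graded poset of rank `d`, presented as a rank function
and a weight scheme on a finite partial order `P`. -/
structure WGP (P : Type) [Fintype P] [PartialOrder P] where
  /-- the rank of the poset -/
  d : ℤ
  /-- the rank function -/
  rk : P → ℤ
  rk_mono : Monotone rk
  rk_lb : ∀ x, -1 ≤ rk x
  rk_ub : ∀ x, rk x ≤ d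
  rk_covBy : ∀ a b : P, a ⋖ b → rk b = rk a + 1
  bot_unique : ∃! x : P, rk x = -1
  isPure : ∀ x : P, ∃ y : P, rk y = d ∧ x ≤ y
  /-- the weight function -/
  m : P → ℝ
  m_pos : ∀ x, 0 < m x
  /-- the transition probabilities: `p y x` is `p_{y → x}` -/
  p : P → P → ℝ
  p_nonneg : ∀ y x, 0 ≤ p y x
  p_pos_iff : ∀ y x, 0 < p y x ↔ x ⋖ y
  p_sum : ∀ y, 0 ≤ rk y → ∑ x ∈ univ.filter (fun x => x ⋖ y), p y x = 1
  m_eq : ∀ x, rk x < d → m x = ∑ y ∈ univ.filter (fun y => x ⋖ y), p y x * m y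
  m_bot : ∀ x, rk x = -1 → m x = 1

/-- `T` has at most `n` eigenvalues greater than `c`, counted with
(geometric) multiplicity. -/
def eigMultAboveLe {V : Type*} [AddCommGroup V] [Module ℝ V]
    (T : Module.End ℝ V) (c : ℝ) (n : ℕ) : Prop :=
  ∀ s : Finset ℝ, (∀ μ ∈ s, c < μ) →
    ∑ μ ∈ s, Module.finrank ℝ (T.eigenspace μ) ≤ n

/-- `μ` is the second largest eigenvalue of `T`, counted with multiplicity. -/
def IsSecondLargestEig {V : Type*} [AddCommGroup V] [Module ℝ V]
    (T : Module.End ℝ V) (μ : ℝ) : Prop :=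
  T.HasEigenvalue μ ∧ eigMultAboveLe T μ 1 ∧
    ∃ s : Finset ℝ, (∀ ν ∈ s, μ ≤ ν) ∧
      2 ≤ ∑ ν ∈ s, Module.finrank ℝ (T.eigenspace ν)

/-- `ν` is the least eigenvalue of `T`. -/
def IsLeastEig {V : Type*} [AddCommGroup V] [Module ℝ V]
    (T : Module.End ℝ V) (ν : ℝ) : Prop :=
  T.HasEigenvalue ν ∧ ∀ c : ℝ, T.HasEigenvalue c → ν ≤ c

/-- `λ(T) ≤ lam`, i.e. the second largest eigenvalue of `T` (with multiplicity)
is at most `lam` and the least eigenvalue is at least `-lam`. -/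
def lamBd {V : Type*} [AddCommGroup V] [Module ℝ V]
    (T : Module.End ℝ V) (lam : ℝ) : Prop :=
  eigMultAboveLe T lam 1 ∧ ∀ c : ℝ, T.HasEigenvalue c → -lam ≤ c

namespace WGP

variable {P : Type} [Fintype P] [PartialOrder P] (W : WGP P)

/-- The level set `P(i)`. -/
def lvl (i : ℤ) : Finset P := univ.filter (fun x => W.rk x = i)

/-- The weighted inner product on `C^i`. -/
def innerAt (i : ℤ) (f g : P → ℝ) : ℝ := ∑ x ∈ W.lvl i, W.m x * f x * g x

/-- The squared norm on `C^i`. -/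
def normSqAt (i : ℤ) (f : P → ℝ) : ℝ := W.innerAt i f f

/-- The norm on `C^i`. -/
def normAt (i : ℤ) (f : P → ℝ) : ℝ := Real.sqrt (W.normSqAt i f)

/-- The matrix of transition probabilities : entry `(y, x)` is `p_{y→x}`,
which vanishes unless `x ⋖ y`.  This is also the matrix of the up operator. -/
def upMat : Matrix P P ℝ := Matrix.of fun y x => W.p y x

/-- The matrix of the down operator. -/
def downMat : Matrix P P ℝ := Matrix.of fun x y => W.p y x * W.m y / W.m x

/-- The up operator `U`. -/
def Up (f : P → ℝ) : P → ℝ := W.upMat.mulVec f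

/-- The down operator `D`. -/
def Down (f : P → ℝ) : P → ℝ := W.downMat.mulVec f

/-- `chSum x y = Σ_{c ∈ Ch(y→x)} p(c)`, the total `p`-weight of maximal chains
from `x` up to `y` (the entry of the corresponding power of the transition
matrix). -/
def chSum (x y : P) : ℝ := (W.upMat ^ (W.rk y - W.rk x).toNat) y x

/-- The induced weight function of the link `P_x`. -/
def mL (x y : P) : ℝ := W.m y / W.m x * W.chSum x y

/-- The induced transition probabilities of the link `P_x` :
`pL x z y = (p_x)_{z → y}`. -/
def pL (x z y : P) : ℝ := W.p z y * W.chSum x y / W.chSum x z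

/-- The level set `P_x(j)` of the link of `x`. -/
def linkLvl (x : P) (j : ℤ) : Finset P :=
  univ.filter (fun y => x ≤ y ∧ W.rk y = W.rk x + 1 + j)

/-- The inner product of the link `P_x` at link-level `j`. -/
def innerL (x : P) (j : ℤ) (f g : P → ℝ) : ℝ :=
  ∑ y ∈ W.linkLvl x j, W.mL x y * f y * g y

/-- The matrix of the up operator of the link `P_x`. -/
def upMatL (x : P) : Matrix P P ℝ :=
  Matrix.of fun z y => if y ⋖ z ∧ x ≤ y then W.pL x z y else 0

/-- The matrix of the down operator of the link `P_x`. -/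
def downMatL (x : P) : Matrix P P ℝ :=
  Matrix.of fun y z => if y ⋖ z then W.pL x z y * W.mL x z / W.mL x y else 0

/-- The up operator of the link `P_x`. -/
def UpL (x : P) (f : P → ℝ) : P → ℝ := (W.upMatL x).mulVec f

/-- The down operator of the link `P_x`. -/
def DownL (x : P) (f : P → ℝ) : P → ℝ := (W.downMatL x).mulVec f

/-- The up-down walk `M^+_{x,0}` of the link `P_x`. -/
def MplusL (x : P) (f : P → ℝ) : P → ℝ := W.DownL x (W.UpL x f)

/-- The down-up walk `M^-_{x,0}` of the link `P_x`. -/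
def MminusL (x : P) (f : P → ℝ) : P → ℝ := W.UpL x (W.DownL x f)

/-- The adjacency matrix. -/
def adjMat : Matrix P P ℝ := Matrix.of fun y x =>
  if x = y then 0 else
    ∑ z ∈ univ.filter (fun z => x ⋖ z ∧ y ⋖ z),
      W.m z * W.p z x * W.p z y / ((1 - W.p z y) * W.m y)

/-- The adjacency operator. -/
def Adj (f : P → ℝ) : P → ℝ := W.adjMat.mulVec f

/-- The adjacency matrix of the link `P_x`. -/
def adjMatL (x : P) : Matrix P P ℝ := Matrix.of fun y w =>
  if w = y then 0 else
    ∑ z ∈ univ.filter (fun z => w ⋖ z ∧ y ⋖ z),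
      W.mL x z * W.pL x z w * W.pL x z y / ((1 - W.pL x z y) * W.mL x y)

/-- The adjacency operator of the link `P_x`. -/
def AdjL (x : P) (f : P → ℝ) : P → ℝ := (W.adjMatL x).mulVec f

/-- The up-down walk `M^+_l` as an endomorphism of `C^l`. -/
def MplusEnd (l : ℤ) : Module.End ℝ ({x : P // W.rk x = l} → ℝ) :=
  ((W.downMat * W.upMat).submatrix Subtype.val Subtype.val).mulVecLin

/-- The up-down walk `M^+_{x,0}` as an endomorphism of `C^0(P_x)`. -/
def MplusEndL (x : P) : Module.End ℝ ({y : P // x ⋖ y} → ℝ) :=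
  ((W.downMatL x * W.upMatL x).submatrix Subtype.val Subtype.val).mulVecLin

/-- The adjacency operator `A_x` of the link `P_x` as an endomorphism of
`C^0(P_x)`. -/
def AdjEndL (x : P) : Module.End ℝ ({y : P // x ⋖ y} → ℝ) :=
  ((W.adjMatL x).submatrix Subtype.val Subtype.val).mulVecLin

/-- A standard weight scheme. -/
def Standard : Prop :=
  ∀ y x : P, x ⋖ y → W.p y x = 1 / ((univ.filter (fun z => z ⋖ y)).card : ℝ)

/-- `P` is lower regular at level `i` with constant `N`. -/
def LowerRegAt (i : ℤ) (N : ℕ) : Prop :=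
  ∀ y : P, W.rk y = i → (univ.filter (fun z => z ⋖ y)).card = N

/-- `P` is middle regular at level `i` with constant `N`. -/
def MiddleRegAt (i : ℤ) (N : ℕ) : Prop :=
  ∀ x z : P, W.rk x = i + 1 → W.rk z = i - 1 → z < x →
    (univ.filter (fun y => z ⋖ y ∧ y ⋖ x)).card = N

/-- `P` is `∨∧`-regular at level `i` with constant `N`. -/
def WedgeRegAt (i : ℤ) (N : ℕ) : Prop :=
  ∀ y₁ y₂ : P, W.rk y₁ = i → W.rk y₂ = i → y₁ ≠ y₂ → (∃ z, y₁ ⋖ z ∧ y₂ ⋖ z) →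
    (univ.filter (fun s => s ⋖ y₁ ∧ s ⋖ y₂)).card = N

/-- `P` is `⅄`-regular with constant `R`. -/
def WyeReg (R : ℕ) : Prop :=
  ∀ u y₁ y₂ : P, W.rk u = 2 → W.rk y₁ = 0 → W.rk y₂ = 0 → y₁ ≠ y₂ →
    y₁ < u → y₂ < u →
    (univ.filter (fun z => y₁ ⋖ z ∧ y₂ ⋖ z ∧ z ⋖ u)).card = R

/-- Property UL.1 with constants `c`. -/
def UL1 (c : ℤ → ℝ) : Prop :=
  ∀ l : ℤ, 0 ≤ l → l < W.d → ∀ y : P, W.rk y = l → ∀ x : P, y ⋖ x →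
    ∑ z ∈ univ.filter (fun z => z ⋖ y), W.p y z ^ 2 / W.chSum z x = c l

/-- Property UL.2 with constants `c`. -/
def UL2 (c : ℤ → ℝ) : Prop :=
  ∀ l : ℤ, 0 ≤ l → l < W.d → ∀ y₁ y₂ : P, W.rk y₁ = l → W.rk y₂ = l → y₁ ≠ y₂ →
    ∀ x : P, y₁ ⋖ x → y₂ ⋖ x →
    ∑ z ∈ univ.filter (fun z => z ⋖ y₁ ∧ z ⋖ y₂),
      W.p y₁ z * W.p y₂ z / W.chSum z x = c l

/-- Property UL.3 with constants `c`. -/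
def UL3 (c : ℤ → ℝ) : Prop :=
  ∀ l : ℤ, 0 ≤ l → l < W.d → ∀ y : P, W.rk y = l →
    ∑ x ∈ univ.filter (fun x => y ⋖ x), W.m x * W.p x y ^ 2 = c l * W.m y

/-- Property AL. -/
def AL : Prop :=
  ∀ l : ℤ, 0 ≤ l → l ≤ W.d - 1 → ∀ x y : P, W.rk x = l → W.rk y = l → x ≠ y →
    ∑ z ∈ univ.filter (fun z => x ⋖ z ∧ y ⋖ z),
        W.m z * W.p z x * W.p z y / (1 - W.p z x)
    = ∑ z ∈ univ.filter (fun z => x ⋖ z ∧ y ⋖ z),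
        W.m z * W.p z x * W.p z y *
          ∑ s ∈ univ.filter (fun s => s ⋖ x ∧ s ⋖ y),
            W.p x s * W.p y s / (W.chSum s z - W.p z x * W.p x s)

/-- Equation TL.1 with constant `c`. -/
def TL1 (c : ℝ) : Prop :=
  ∀ y : P, W.rk y = 0 →
    c * W.m y = ∑ z ∈ univ.filter (fun z => y ⋖ z), W.m z * W.p z y ^ 2 *
      ∑ x ∈ univ.filter (fun x => x ⋖ z ∧ x ≠ y), W.p z x / (1 - W.p z x) ^ 2

/-- Equation TL.2 with constant `c`. -/
def TL2 (c : ℝ) : Prop :=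
  ∀ y₁ y₂ : P, W.rk y₁ = 0 → W.rk y₂ = 0 → y₁ ≠ y₂ →
    c * ∑ z ∈ univ.filter (fun z => y₁ ⋖ z ∧ y₂ ⋖ z),
          W.m z * W.p z y₁ * W.p z y₂ / (1 - W.p z y₁)
    = ∑ z ∈ univ.filter (fun z => y₁ ⋖ z ∧ y₂ ⋖ z),
        W.m z * W.p z y₁ * W.p z y₂ *
          ∑ x ∈ univ.filter (fun x => x ⋖ z ∧ x ≠ y₁ ∧ x ≠ y₂),
            W.p z x / (1 - W.p z x) ^ 2

/-- Equation TL.3 with constant `c`. -/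
def TL3 (c : ℝ) : Prop :=
  ∀ y : P, W.rk y = 0 →
    c * W.m y =
      ∑ x ∈ univ.filter (fun x => W.rk x = 0 ∧ x ≠ y),
        ∑ z ∈ univ.filter (fun z => x ⋖ z ∧ y ⋖ z),
          ∑ w ∈ univ.filter (fun w => w ≠ z ∧ x ⋖ w ∧ y ⋖ w),
            ∑ u ∈ univ.filter (fun u => z ⋖ u ∧ w ⋖ u),
              W.m u * W.p u z * W.p u w * W.p w y * W.p z y * W.p w x * W.p z x /
                (W.chSum x u * (1 - W.p u z * W.p z x / W.chSum x u) *
                  (1 - W.p w x) * (1 - W.p z x))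

/-- Equation TL.4 with constant `c`. -/
def TL4 (c : ℝ) : Prop :=
  ∀ y₁ y₂ : P, W.rk y₁ = 0 → W.rk y₂ = 0 → y₁ ≠ y₂ →
    c * ∑ z ∈ univ.filter (fun z => y₁ ⋖ z ∧ y₂ ⋖ z),
          W.m z * W.p z y₁ * W.p z y₂ / (1 - W.p z y₁)
    = ∑ x ∈ univ.filter (fun x => W.rk x = 0 ∧ x ≠ y₁ ∧ x ≠ y₂),
        ∑ z ∈ univ.filter (fun z => x ⋖ z ∧ y₂ ⋖ z),
          ∑ w ∈ univ.filter (fun w => w ≠ z ∧ x ⋖ w ∧ y₁ ⋖ w),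
            ∑ u ∈ univ.filter (fun u => z ⋖ u ∧ w ⋖ u),
              W.m u * W.p u z * W.p u w * W.p w y₁ * W.p z y₂ * W.p w x * W.p z x /
                (W.chSum x u * (1 - W.p u z * W.p z x / W.chSum x u) *
                  (1 - W.p w x) * (1 - W.p z x))

/-- The induced function `f̂_x ∈ C^0(P_x)` of `f ∈ C^0`. -/
def hatF (x : P) (f : P → ℝ) : P → ℝ := fun z =>
  (1 / (1 - W.p z x)) * ∑ y ∈ univ.filter (fun y => y ≠ x ∧ y ⋖ z), W.p z y * f y

/-- `P` is connected: the Markov chain `M^+_0` on `P(0)` is irreducible. -/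
def Connected : Prop :=
  ∀ y z : P, W.rk y = 0 → W.rk z = 0 →
    ∃ j : ℕ, 0 < j ∧ ((W.downMat * W.upMat) ^ j) z y ≠ 0

/-- The link `P_x` is connected: the Markov chain `M^+_{x,0}` on `P_x(0)` is
irreducible. -/
def LinkConnected (x : P) : Prop :=
  ∀ y z : P, x ⋖ y → x ⋖ z →
    ∃ j : ℕ, 0 < j ∧ ((W.downMatL x * W.upMatL x) ^ j) z y ≠ 0

/-- `c` is a nontrivial eigenvalue of the adjacency operator `A` of `P`,
i.e. one with an eigenvector orthogonal to the constants. -/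
def IsNontrivEigAdj (c : ℝ) : Prop :=
  ∃ f : P → ℝ, (∃ y, W.rk y = 0 ∧ f y ≠ 0) ∧
    (∀ y, W.rk y = 0 → W.Adj f y = c * f y) ∧
    W.innerAt 0 f (fun _ => 1) = 0

/-- `c` is a nontrivial eigenvalue of the adjacency operator `A_x` of the
link `P_x`. -/
def IsNontrivEigAdjL (x : P) (c : ℝ) : Prop :=
  ∃ f : P → ℝ, (∃ y, x ⋖ y ∧ f y ≠ 0) ∧
    (∀ y, x ⋖ y → W.AdjL x f y = c * f y) ∧
    W.innerL x 0 f (fun _ => 1) = 0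

end WGP

namespace WGP

variable {P : Type} [Fintype P] [PartialOrder P] (W : WGP P)

theorem p_eq_zero_of_not_covBy {x y : P} (h : ¬ x ⋖ y) : W.p y x = 0 :=
  le_antisymm (not_lt.mp (mt (W.p_pos_iff y x).mp h)) (W.p_nonneg y x)

theorem chSum_of_rk_le {x y : P} (h : W.rk y ≤ W.rk x) :
    W.chSum x y = if y = x then 1 else 0 := by
  rw [chSum, Int.toNat_of_nonpos (sub_nonpos.mpr h), pow_zero, Matrix.one_apply]

theorem chSum_self (x : P) : W.chSum x x = 1 := by
  rw [W.chSum_of_rk_le le_rfl, if_pos rfl]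

theorem chSum_eq_sum_covBy {x z : P} (h : W.rk x < W.rk z) :
    W.chSum x z = ∑ y ∈ univ.filter (fun y => y ⋖ z), W.p z y * W.chSum x y := by
  obtain ⟨n, hn⟩ : ∃ n : ℕ, W.rk z = W.rk x + n + 1 :=
    ⟨(W.rk z - W.rk x - 1).toNat, by omega⟩
  have hz : (W.rk z - W.rk x).toNat = n + 1 := by omega
  rw [chSum, hz, pow_succ', Matrix.mul_apply, sum_filter]
  refine sum_congr rfl fun y _ => ?_
  split_ifs with hyz
  · have hy : (W.rk y - W.rk x).toNat = n := by
      have := W.rk_covBy y z hyz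
      omega
    rw [chSum, hy, upMat, Matrix.of_apply]
  · rw [upMat, Matrix.of_apply, W.p_eq_zero_of_not_covBy hyz, zero_mul]

theorem chSum_nonneg (x y : P) : 0 ≤ W.chSum x y := by
  induction y using WellFoundedLT.induction with
  | ind y ih =>
    rcases le_or_gt (W.rk y) (W.rk x) with h | h
    · rw [W.chSum_of_rk_le h]
      split_ifs <;> norm_num
    · rw [W.chSum_eq_sum_covBy h]
      exact sum_nonneg fun w hw =>
        mul_nonneg (W.p_nonneg y w) (ih w (mem_filter.mp hw).2.lt)

theorem chSum_eq_zero_of_not_le {x y : P} (hxy : ¬ x ≤ y) : W.chSum x y = 0 := by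
  induction y using WellFoundedLT.induction with
  | ind y ih =>
    rcases le_or_gt (W.rk y) (W.rk x) with h | h
    · rw [W.chSum_of_rk_le h, if_neg fun hyx => hxy hyx.ge]
    · rw [W.chSum_eq_sum_covBy h]
      refine sum_eq_zero fun w hw => ?_
      have hwy : w ⋖ y := (mem_filter.mp hw).2
      rw [ih w hwy.lt fun hxw => hxy (hxw.trans hwy.le), mul_zero]

theorem chSum_pos {x y : P} (hxy : x ≤ y) : 0 < W.chSum x y := by
  induction y using WellFoundedLT.induction with
  | ind y ih =>
    rcases hxy.eq_or_lt with rfl | hlt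
    · rw [W.chSum_self]
      exact one_pos
    · obtain ⟨w, hxw, hwy⟩ := exists_le_covBy_of_lt hlt
      have hrk : W.rk x < W.rk y := by
        have := W.rk_mono hxw
        have := W.rk_covBy w y hwy
        omega
      rw [W.chSum_eq_sum_covBy hrk]
      exact sum_pos' (fun v _ => mul_nonneg (W.p_nonneg y v) (W.chSum_nonneg x v))
        ⟨w, by simpa using hwy, mul_pos ((W.p_pos_iff y w).mpr hwy) (ih w hwy.lt hxw)⟩

theorem mem_lvl {i : ℤ} {x : P} : x ∈ W.lvl i ↔ W.rk x = i := by
  simp [lvl]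

theorem sum_lvl_chSum {k : ℤ} (hk : -1 ≤ k) {y : P} (hy : k ≤ W.rk y) :
    ∑ x ∈ W.lvl k, W.chSum x y = 1 := by
  induction y using WellFoundedLT.induction with
  | ind y ih =>
    rcases hy.eq_or_lt with hky | hky
    · calc ∑ x ∈ W.lvl k, W.chSum x y
          = ∑ x ∈ W.lvl k, if y = x then 1 else 0 :=
            sum_congr rfl fun x hx =>
              W.chSum_of_rk_le (hky.symm.trans (W.mem_lvl.mp hx).symm).le
        _ = 1 := by rw [sum_ite_eq, if_pos (W.mem_lvl.mpr hky.symm)]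
    · calc ∑ x ∈ W.lvl k, W.chSum x y
          = ∑ x ∈ W.lvl k, ∑ w ∈ univ.filter (fun w => w ⋖ y), W.p y w * W.chSum x w :=
            sum_congr rfl fun x hx =>
              W.chSum_eq_sum_covBy ((W.mem_lvl.mp hx).trans_lt hky)
        _ = ∑ w ∈ univ.filter (fun w => w ⋖ y), W.p y w * ∑ x ∈ W.lvl k, W.chSum x w := by
            rw [sum_comm]
            simp only [mul_sum]
        _ = ∑ w ∈ univ.filter (fun w => w ⋖ y), W.p y w := by
            refine sum_congr rfl fun w hw => ?_
            have hwy : w ⋖ y := (mem_filter.mp hw).2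
            have := W.rk_covBy w y hwy
            rw [ih w hwy.lt (by omega), mul_one]
        _ = 1 := W.p_sum y (by omega)

theorem m_mul_mL (x y : P) : W.m x * W.mL x y = W.m y * W.chSum x y := by
  rw [mL, ← mul_assoc, mul_div_cancel₀ _ (W.m_pos x).ne']

theorem m_mul_innerL (x : P) (j : ℤ) (f g : P → ℝ) :
    W.m x * W.innerL x j f g =
      ∑ y ∈ W.lvl (W.rk x + 1 + j), W.chSum x y * (W.m y * f y * g y) := by
  have hlevel : W.linkLvl x j = (W.lvl (W.rk x + 1 + j)).filter (fun y => x ≤ y) := by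
    ext y
    simp [linkLvl, lvl, and_comm]
  rw [innerL, mul_sum, hlevel, sum_filter]
  refine sum_congr rfl fun y _ => ?_
  split_ifs with hxy
  · linear_combination (f y * g y) * W.m_mul_mL x y
  · rw [W.chSum_eq_zero_of_not_le hxy, zero_mul]

theorem innerAt_eq_sum_innerL {k i : ℤ} (hk : -1 ≤ k) (hki : k ≤ i) (f g : P → ℝ) :
    W.innerAt i f g = ∑ x ∈ W.lvl k, W.m x * W.innerL x (i - k - 1) f g := by
  symm
  calc ∑ x ∈ W.lvl k, W.m x * W.innerL x (i - k - 1) f g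
      = ∑ x ∈ W.lvl k, ∑ y ∈ W.lvl i, W.chSum x y * (W.m y * f y * g y) := by
        refine sum_congr rfl fun x hx => ?_
        have hi : W.rk x + 1 + (i - k - 1) = i := by
          rw [W.mem_lvl.mp hx]
          ring
        rw [W.m_mul_innerL, hi]
    _ = ∑ y ∈ W.lvl i, (∑ x ∈ W.lvl k, W.chSum x y) * (W.m y * f y * g y) := by
        rw [sum_comm]
        simp only [sum_mul]
    _ = W.innerAt i f g := by
        refine sum_congr rfl fun y hy => ?_
        rw [W.sum_lvl_chSum hk (hki.trans_eq (W.mem_lvl.mp hy).symm), one_mul]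

theorem downMatL_apply_eq_downMat_apply {x y : P} (hxy : x ≤ y) (z : P) :
    W.downMatL x y z = W.downMat y z := by
  rw [downMatL, downMat, Matrix.of_apply, Matrix.of_apply]
  split_ifs with hyz
  · have hx := (W.m_pos x).ne'
    have hy := (W.m_pos y).ne'
    have hcy := (W.chSum_pos hxy).ne'
    have hcz := (W.chSum_pos (hxy.trans hyz.le)).ne'
    rw [pL, mL, mL]
    field_simp
  · rw [W.p_eq_zero_of_not_covBy hyz, zero_mul, zero_div]

theorem downL_apply_eq_down_apply {x y : P} (hxy : x ≤ y) (f : P → ℝ) :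
    W.DownL x f y = W.Down f y :=
  congrArg (· ⬝ᵥ f) (funext (W.downMatL_apply_eq_downMat_apply hxy))

theorem innerL_congr {x : P} {j : ℤ} {f f' g g' : P → ℝ}
    (hf : ∀ y, x ≤ y → f y = f' y) (hg : ∀ y, x ≤ y → g y = g' y) :
    W.innerL x j f g = W.innerL x j f' g' := by
  refine sum_congr rfl fun y hy => ?_
  have hxy : x ≤ y := (mem_filter.mp hy).2.1
  rw [hf y hxy, hg y hxy]

end WGP

/-- the basic localization property for the down operators. -/
theorem stmt1 {P : Type} [Fintype P] [PartialOrder P] (W : WGP P)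
    (k l : ℤ) (hk : -1 ≤ k) (hkl : k < l) (hl : l ≤ W.d) (f g : P → ℝ) :
    W.innerAt (l - 1) (W.Down f) (W.Down g)
      = ∑ x ∈ W.lvl k, W.m x * W.innerL x (l - k - 2) (W.DownL x f) (W.DownL x g) := by
  rw [W.innerAt_eq_sum_innerL hk (Int.le_sub_one_of_lt hkl),
    show l - 1 - k - 1 = l - k - 2 by ring]
  refine sum_congr rfl fun x _ => ?_
  rw [W.innerL_congr (fun _ hxy => W.downL_apply_eq_down_apply hxy f)
    (fun _ hxy => W.downL_apply_eq_down_apply hxy g)]
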